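/- Let α > -1/2. There exist positive constants c₁ and c₂ (depending only on α) such that for all t, λ ∈ ℝ one has c₁ · min{1, (λt)²} ≤ 1 − j_α(λt) ≤ c₂ · min{1, (λt)²}. -/

import Mathlib

open Real

/-- The normalized Bessel function of the first kind and order `α`:
`j_α(s) = Γ(α+1) · Σ_{n≥0} (−1)ⁿ (s/2)^{2n} / (n! Γ(n+α+1))`. -/
noncomputable def besselNorm (α : ℝ) (s : ℝ) : ℝ :=
  Real.Gamma (α + 1) *
    ∑' n : ℕ, (-1 : ℝ) ^ n * (s / 2) ^ (2 * n) / (n.factorial * Real.Gamma (n + α + 1))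

/-!
Poisson's formula says that `j_α` is the real part of the characteristic function `φ` of a
probability measure that is absolutely continuous with respect to Lebesgue measure. For such a
measure, `1 - cos x ≤ min 2 (x² / 2)` gives the upper bound. For the lower bound, the
Riemann–Lebesgue lemma gives `1 - Re φ(t) ≥ 1 / 2` once `‖t‖ ≥ R`, and the inequality
`1 - cos (n x) ≤ n² (1 - cos x)`, integrated, gives `1 - Re φ(n t) ≤ n² (1 - Re φ(t))`; taking
`n = ⌈R / ‖t‖⌉` carries the lower bound from large arguments to small ones.
-/

open MeasureTheory ProbabilityTheory Filter Set
open scoped Topology RealInnerProductSpace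

lemma abs_sin_nat_mul_le (n : ℕ) (x : ℝ) : |sin (n * x)| ≤ n * |sin x| := by
  induction n with
  | zero => simp
  | succ n ih =>
    calc |sin ((n + 1 : ℕ) * x)|
        = |sin (n * x) * cos x + cos (n * x) * sin x| := by
          rw [← sin_add, Nat.cast_succ, add_one_mul]
      _ ≤ |sin (n * x)| * |cos x| + |cos (n * x)| * |sin x| := by
          simpa only [abs_mul] using abs_add_le (sin (n * x) * cos x) (cos (n * x) * sin x)
      _ ≤ |sin (n * x)| * 1 + 1 * |sin x| := by gcongr <;> exact abs_cos_le_one _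
      _ ≤ (n + 1 : ℕ) * |sin x| := by push_cast; linarith

lemma one_sub_cos_nat_mul_le (n : ℕ) (x : ℝ) : 1 - cos (n * x) ≤ n ^ 2 * (1 - cos x) := by
  have one_sub_cos_eq (y : ℝ) : 1 - cos y = 2 * sin (y / 2) ^ 2 := by
    rw [sin_sq_eq_half_sub, mul_div_cancel₀ y two_ne_zero]
    ring
  have h : sin (n * (x / 2)) ^ 2 ≤ (n * |sin (x / 2)|) ^ 2 :=
    sq_le_sq' (by linarith [neg_abs_le (sin (n * (x / 2))), abs_sin_nat_mul_le n (x / 2)])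
      ((le_abs_self _).trans (abs_sin_nat_mul_le n (x / 2)))
  rw [mul_pow, sq_abs] at h
  rw [one_sub_cos_eq, one_sub_cos_eq, mul_div_assoc]
  linarith

lemma exists_nat_le_mul_and_mul_min_le {R x : ℝ} (hR : 0 ≤ R) (hx : 0 < x) :
    ∃ n : ℕ, R ≤ n * x ∧ n * min 1 x ≤ R + 1 := by
  refine ⟨⌈R / x⌉₊, (div_le_iff₀ hx).1 (Nat.le_ceil _), ?_⟩
  calc ⌈R / x⌉₊ * min 1 x ≤ (R / x + 1) * min 1 x := by
        gcongr
        exact (Nat.ceil_lt_add_one (by positivity)).le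
    _ = R / x * min 1 x + min 1 x := add_one_mul _ _
    _ ≤ R / x * x + 1 := by gcongr <;> simp
    _ = R + 1 := by rw [div_mul_cancel₀ R hx.ne']

section CharFun

variable {V : Type*} [NormedAddCommGroup V] [InnerProductSpace ℝ V] [MeasurableSpace V]
  [BorelSpace V] {μ : Measure V}

lemma integrable_cos_inner [IsFiniteMeasure μ] (t : V) :
    Integrable (fun x ↦ cos ⟪x, t⟫) μ :=
  .of_bound (Continuous.aestronglyMeasurable (by fun_prop)) 1
    (ae_of_all _ fun _ ↦ abs_cos_le_one _)

lemma re_charFun [IsFiniteMeasure μ] (t : V) : (charFun μ t).re = ∫ x, cos ⟪x, t⟫ ∂μ := by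
  have h : Integrable (fun x ↦ Complex.exp (⟪x, t⟫ * Complex.I)) μ :=
    .of_bound (Continuous.aestronglyMeasurable (by fun_prop)) 1
      (ae_of_all _ fun x ↦ (Complex.norm_exp_ofReal_mul_I _).le)
  rw [charFun_apply, ← RCLike.re_to_complex, ← integral_re h]
  simp only [RCLike.re_to_complex, Complex.exp_ofReal_mul_I_re]

lemma one_sub_re_charFun [IsProbabilityMeasure μ] (t : V) :
    1 - (charFun μ t).re = ∫ x, (1 - cos ⟪x, t⟫) ∂μ := by
  rw [integral_sub (integrable_const 1) (integrable_cos_inner t), re_charFun]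
  simp

lemma one_sub_re_charFun_nsmul_le [IsProbabilityMeasure μ] (n : ℕ) (t : V) :
    1 - (charFun μ (n • t)).re ≤ n ^ 2 * (1 - (charFun μ t).re) := by
  rw [one_sub_re_charFun, one_sub_re_charFun, ← integral_const_mul]
  refine integral_mono ((integrable_const 1).sub (integrable_cos_inner _))
    (((integrable_const 1).sub (integrable_cos_inner _)).const_mul _) fun x ↦ ?_
  rw [← Nat.cast_smul_eq_nsmul ℝ n t, inner_smul_right]
  exact one_sub_cos_nat_mul_le n _

lemma one_sub_re_charFun_le_mul_sq [IsProbabilityMeasure μ]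
    (hμ : Integrable (fun x ↦ ‖x‖ ^ 2) μ) (t : V) :
    1 - (charFun μ t).re ≤ (∫ x, ‖x‖ ^ 2 ∂μ) / 2 * ‖t‖ ^ 2 := by
  rw [one_sub_re_charFun, div_mul_eq_mul_div, ← integral_mul_const, ← integral_div]
  refine integral_mono ((integrable_const 1).sub (integrable_cos_inner _))
    ((hμ.mul_const _).div_const _) fun x ↦ ?_
  have h : ⟪x, t⟫ ^ 2 ≤ ‖x‖ ^ 2 * ‖t‖ ^ 2 := by
    rw [← mul_pow, ← sq_abs]
    gcongr
    exact abs_real_inner_le_norm x t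
  dsimp only
  linarith [one_sub_sq_div_two_le_cos (x := ⟪x, t⟫)]

lemma one_sub_re_charFun_le_mul_min [IsProbabilityMeasure μ]
    (hμ : Integrable (fun x ↦ ‖x‖ ^ 2) μ) (t : V) :
    1 - (charFun μ t).re ≤ max 2 ((∫ x, ‖x‖ ^ 2 ∂μ) / 2) * min 1 (‖t‖ ^ 2) := by
  rw [mul_min_of_nonneg _ _ (by positivity), mul_one]
  refine le_min (le_max_of_le_left ?_) ?_
  · linarith [(abs_le.1 ((Complex.abs_re_le_norm _).trans (norm_charFun_le_one (μ := μ) t))).1]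
  · refine (one_sub_re_charFun_le_mul_sq hμ t).trans ?_
    gcongr
    exact le_max_right _ _

variable [FiniteDimensional ℝ V]

lemma tendsto_charFun_cocompact [IsFiniteMeasure μ] (hμ : μ ≪ volume) :
    Tendsto (charFun μ) (cocompact V) (𝓝 0) := by
  have hscale : Tendsto (fun t : V ↦ -(2 * π)⁻¹ • t) (cocompact V) (cocompact V) :=
    (Homeomorph.smulOfNeZero _
      (neg_ne_zero.2 (inv_ne_zero two_pi_pos.ne'))).isClosedEmbedding.tendsto_cocompact
  refine ((tendsto_integral_exp_inner_smul_cocompact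
    fun x : V ↦ ((μ.rnDeriv volume x).toReal : ℂ)).comp hscale).congr fun t ↦ ?_
  rw [charFun_eq_fourierIntegral', VectorFourier.fourierIntegral, ← integral_rnDeriv_smul hμ]
  refine integral_congr_ae (ae_of_all _ fun x ↦ ?_)
  simp [Circle.smul_def, mul_comm]

theorem exists_mul_min_le_one_sub_re_charFun [IsProbabilityMeasure μ] (hμ : μ ≪ volume) :
    ∃ c > 0, ∀ t : V, c * min 1 (‖t‖ ^ 2) ≤ 1 - (charFun μ t).re := by
  obtain ⟨R, hR, hfar⟩ : ∃ R ≥ 0, ∀ t : V, R ≤ ‖t‖ → (charFun μ t).re ≤ 1 / 2 := by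
    have hlim : Tendsto (fun t ↦ (charFun μ t).re) (cocompact V) (𝓝 0) :=
      (Complex.continuous_re.tendsto 0).comp (tendsto_charFun_cocompact hμ)
    have h := hlim.eventually_le_const (one_half_pos (α := ℝ))
    rw [← Metric.cobounded_eq_cocompact, hasBasis_cobounded_norm.eventually_iff] at h
    obtain ⟨R, -, hR⟩ := h
    exact ⟨|R|, abs_nonneg R, fun t ht ↦ hR ((le_abs_self R).trans ht)⟩
  refine ⟨1 / 2 / (R + 1) ^ 2, by positivity, fun t ↦ ?_⟩
  obtain rfl | ht := eq_or_ne t 0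
  · simp
  obtain ⟨n, hRn, hn⟩ := exists_nat_le_mul_and_mul_min_le hR (norm_pos_iff.2 ht)
  have hnear : 1 / 2 ≤ n ^ 2 * (1 - (charFun μ t).re) := by
    have := hfar (n • t) (by rwa [← Nat.cast_smul_eq_nsmul ℝ, norm_smul, Real.norm_natCast])
    linarith [one_sub_re_charFun_nsmul_le (μ := μ) n t]
  have hmin : min 1 (‖t‖ ^ 2) = min 1 ‖t‖ ^ 2 := by
    simpa only [one_pow] using (pow_left_monotoneOn (n := 2)).map_min
      (mem_ofPred.2 zero_le_one) (mem_ofPred.2 (norm_nonneg t)) |>.symm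
  have hnonneg : 0 ≤ 1 - (charFun μ t).re :=
    sub_nonneg.2 ((Complex.re_le_norm _).trans (norm_charFun_le_one t))
  rw [div_mul_eq_mul_div, div_le_iff₀ (by positivity), hmin]
  calc 1 / 2 * min 1 ‖t‖ ^ 2
      ≤ n ^ 2 * (1 - (charFun μ t).re) * min 1 ‖t‖ ^ 2 := by gcongr
    _ = (1 - (charFun μ t).re) * (n * min 1 ‖t‖) ^ 2 := by ring
    _ ≤ (1 - (charFun μ t).re) * (R + 1) ^ 2 := by gcongr

end CharFun

lemma hasSum_re_charFun_of_ae_abs_le {μ : Measure ℝ} [IsFiniteMeasure μ] {R : ℝ}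
    (hR : ∀ᵐ x ∂μ, |x| ≤ R) (s : ℝ) :
    HasSum (fun n : ℕ ↦ (-1) ^ n * s ^ (2 * n) / (2 * n).factorial * ∫ x, x ^ (2 * n) ∂μ)
      (charFun μ s).re := by
  simp_rw [re_charFun, ← integral_const_mul]
  have hsum : Summable fun n : ℕ ↦ (|s| * R) ^ (2 * n) / ((2 * n).factorial : ℝ) :=
    (hasSum_cosh (|s| * R)).summable
  refine hasSum_integral_of_dominated_convergence
    (fun n _ ↦ (|s| * R) ^ (2 * n) / (2 * n).factorial) (fun n ↦ by fun_prop) (fun n ↦ ?_)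
    (ae_of_all _ fun _ ↦ hsum) (integrable_const _) (ae_of_all _ fun x ↦ ?_)
  · filter_upwards [hR] with x hx
    rw [div_mul_eq_mul_div, mul_assoc, ← mul_pow, norm_div, norm_mul, norm_pow, norm_pow, norm_neg,
      norm_one, one_pow, one_mul, Real.norm_natCast, Real.norm_eq_abs, abs_mul]
    gcongr
  · refine (hasSum_cos (s * x)).congr_fun fun n ↦ ?_
    rw [mul_pow]
    ring

lemma absolutelyContinuous_map_restrict_of_leftInvOn {E : Type*} [NormedAddCommGroup E]
    [NormedSpace ℝ E] [FiniteDimensional ℝ E] [MeasurableSpace E] [BorelSpace E] {μ : Measure E}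
    [μ.IsAddHaarMeasure] {f g : E → E} {s : Set E} (hf : AEMeasurable f (μ.restrict s))
    (hg : DifferentiableOn ℝ g (f '' s)) (hgf : LeftInvOn g f s) :
    (μ.restrict s).map f ≪ μ := by
  refine Measure.AbsolutelyContinuous.mk fun N hN hμN ↦ ?_
  rw [Measure.map_apply_of_aemeasurable hf hN,
    Measure.restrict_apply₀ (hf.nullMeasurableSet_preimage hN)]
  refine measure_mono_null (t := g '' (f '' s ∩ N)) ?_ ?_
  · exact fun x hx ↦ ⟨f x, ⟨mem_image_of_mem f hx.2, hx.1⟩, hgf hx.2⟩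
  · exact addHaar_image_eq_zero_of_differentiableOn_of_addHaar_eq_zero μ
      (hg.mono inter_subset_left) (measure_inter_null_of_null_right _ hμN)

section BetaMeasure

variable {a b : ℝ}

lemma measurable_betaPDF (a b : ℝ) : Measurable (betaPDF a b) :=
  (measurable_betaPDFReal a b).ennreal_ofReal

lemma ae_mem_Ioo_betaMeasure (a b : ℝ) : ∀ᵐ x ∂betaMeasure a b, x ∈ Ioo (0 : ℝ) 1 := by
  rw [betaMeasure, ae_withDensity_iff (measurable_betaPDF a b)]
  refine ae_of_all _ fun x hx ↦ ?_
  contrapose! hx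
  rw [betaPDF_eq, if_neg (show ¬(0 < x ∧ x < 1) from hx), ENNReal.ofReal_zero]

lemma betaMeasure_absolutelyContinuous (a b : ℝ) :
    betaMeasure a b ≪ volume.restrict (Ioo 0 1) := by
  rw [← Measure.restrict_eq_self_of_ae_mem (ae_mem_Ioo_betaMeasure a b)]
  exact (withDensity_absolutelyContinuous _ _).restrict _

lemma betaPDFReal_nonneg (ha : 0 < a) (hb : 0 < b) (x : ℝ) : 0 ≤ betaPDFReal a b x := by
  by_cases hx : 0 < x ∧ x < 1
  · exact (betaPDFReal_pos hx.1 hx.2 ha hb).le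
  · rw [betaPDFReal, if_neg hx]

lemma integral_betaMeasure (ha : 0 < a) (hb : 0 < b) (f : ℝ → ℝ) :
    ∫ x, f x ∂betaMeasure a b = ∫ x, betaPDFReal a b x * f x := by
  rw [betaMeasure, integral_withDensity_eq_integral_toReal_smul
    (measurable_betaPDF a b) (ae_of_all _ fun _ ↦ ENNReal.ofReal_lt_top)]
  simp only [betaPDF, ENNReal.toReal_ofReal (betaPDFReal_nonneg ha hb _), smul_eq_mul]

lemma betaPDFReal_mul_rpow (ha : 0 < a) (hb : 0 < b) {r : ℝ} (har : 0 < a + r) (x : ℝ) :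
    betaPDFReal a b x * x ^ r = beta (a + r) b / beta a b * betaPDFReal (a + r) b x := by
  by_cases hx : 0 < x ∧ x < 1
  · have := (beta_pos ha hb).ne'
    have := (beta_pos har hb).ne'
    rw [betaPDFReal, betaPDFReal, if_pos hx, if_pos hx, add_sub_right_comm, rpow_add hx.1]
    field_simp
  · rw [betaPDFReal, betaPDFReal, if_neg hx, if_neg hx, zero_mul, mul_zero]

lemma integral_rpow_betaMeasure (ha : 0 < a) (hb : 0 < b) {r : ℝ} (har : 0 < a + r) :
    ∫ x, x ^ r ∂betaMeasure a b = beta (a + r) b / beta a b := by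
  have hmass : ∫ x, betaPDFReal (a + r) b x = 1 := by
    have := isProbabilityMeasureBeta har hb
    simpa using (integral_betaMeasure har hb fun _ ↦ 1).symm
  simp_rw [integral_betaMeasure ha hb, betaPDFReal_mul_rpow ha hb har]
  rw [integral_const_mul, hmass, mul_one]

end BetaMeasure

lemma Gamma_one_half_add_nat_mul_factorial (n : ℕ) :
    Gamma (1 / 2 + n) * (2 ^ (2 * n) * n.factorial) = (2 * n).factorial * Gamma (1 / 2) := by
  have hdup := Gamma_mul_Gamma_add_half (n + 1 / 2)
  have hdouble : (2 : ℝ) * (n + 1 / 2) = (2 * n : ℕ) + 1 := by push_cast; ring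
  have hhalf : (n : ℝ) + 1 / 2 + 1 / 2 = n + 1 := by ring
  rw [hhalf, hdouble, Gamma_nat_eq_factorial, Gamma_nat_eq_factorial, ← Gamma_one_half_eq,
    sub_add_cancel_right, rpow_neg zero_le_two, rpow_natCast] at hdup
  rw [mul_left_comm, add_comm, hdup]
  field_simp

/-- The law of `√U` for `U ∼ Beta(1/2, α + 1/2)`. Its density on `(0, 1)` is proportional to
`(1 - x²)^(α - 1/2)`, so integrating `cos (s x)` against it is Poisson's integral formula for
`j_α(s)`; the substitution `u = x²` makes the Mathlib beta distribution available. -/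
noncomputable def besselLaw (α : ℝ) : Measure ℝ := (betaMeasure (1 / 2) (α + 1 / 2)).map (√·)

section BesselLaw

variable {α : ℝ}

lemma isProbabilityMeasure_besselLaw (hα : -(1 / 2 : ℝ) < α) :
    IsProbabilityMeasure (besselLaw α) :=
  have := isProbabilityMeasureBeta (one_half_pos (α := ℝ)) (neg_lt_iff_pos_add.1 hα)
  Measure.isProbabilityMeasure_map (by fun_prop)

lemma ae_abs_le_one_besselLaw (α : ℝ) : ∀ᵐ x ∂besselLaw α, |x| ≤ 1 := by
  refine (ae_map_iff (by fun_prop) (measurableSet_le (by fun_prop) (by fun_prop))).2 ?_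
  filter_upwards [ae_mem_Ioo_betaMeasure (1 / 2) (α + 1 / 2)] with u hu
  rw [abs_of_nonneg (sqrt_nonneg u)]
  exact sqrt_le_one.2 hu.2.le

lemma besselLaw_absolutelyContinuous (α : ℝ) : besselLaw α ≪ volume :=
  ((betaMeasure_absolutelyContinuous _ _).map (by fun_prop)).trans <|
    absolutelyContinuous_map_restrict_of_leftInvOn (g := (· ^ 2)) (by fun_prop) (by fun_prop)
      fun _ hu ↦ sq_sqrt hu.1.le

lemma integral_pow_two_mul_besselLaw (hα : -(1 / 2 : ℝ) < α) (n : ℕ) :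
    ∫ x, x ^ (2 * n) ∂besselLaw α =
      beta (1 / 2 + n) (α + 1 / 2) / beta (1 / 2) (α + 1 / 2) := by
  rw [besselLaw, integral_map (by fun_prop) (by fun_prop),
    ← integral_rpow_betaMeasure one_half_pos (neg_lt_iff_pos_add.1 hα) (by positivity)]
  refine integral_congr_ae ?_
  filter_upwards [ae_mem_Ioo_betaMeasure (1 / 2) (α + 1 / 2)] with u hu
  rw [pow_mul, sq_sqrt hu.1.le, rpow_natCast]

theorem besselNorm_eq_re_charFun (hα : -(1 / 2 : ℝ) < α) (s : ℝ) :
    besselNorm α s = (charFun (besselLaw α) s).re := by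
  have := isProbabilityMeasure_besselLaw hα
  rw [besselNorm, ← tsum_mul_left,
    ← (hasSum_re_charFun_of_ae_abs_le (ae_abs_le_one_besselLaw α) s).tsum_eq]
  refine tsum_congr fun n ↦ ?_
  have hhalf : Gamma (1 / 2) ≠ 0 := (Gamma_pos_of_pos one_half_pos).ne'
  have hb : Gamma (α + 1 / 2) ≠ 0 := (Gamma_pos_of_pos (neg_lt_iff_pos_add.1 hα)).ne'
  have hquot : (2 * n).factorial * Gamma (1 / 2) / (2 ^ (2 * n) * n.factorial) =
      Gamma (1 / 2 + n) := by
    rw [← Gamma_one_half_add_nat_mul_factorial, mul_div_cancel_right₀ _ (by positivity)]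
  rw [integral_pow_two_mul_besselLaw hα, beta, beta, ← hquot,
    show (1 / 2 : ℝ) + (α + 1 / 2) = α + 1 by ring,
    show (1 / 2 : ℝ) + n + (α + 1 / 2) = n + α + 1 by ring, div_pow]
  -- `field_simp` would otherwise normalize the arguments of `Gamma`.
  generalize Gamma (α + 1 / 2) = x at hb
  generalize Gamma (1 / 2) = y at hhalf
  field_simp

lemma integrable_norm_sq_besselLaw (hα : -(1 / 2 : ℝ) < α) :
    Integrable (fun x ↦ ‖x‖ ^ 2) (besselLaw α) := by
  have := isProbabilityMeasure_besselLaw hα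
  refine .of_bound (by fun_prop) 1 ?_
  filter_upwards [ae_abs_le_one_besselLaw α] with x hx
  rw [norm_pow, norm_norm]
  exact pow_le_one₀ (norm_nonneg x) hx

end BesselLaw

/-- For `α > -1/2` there are positive constants `c₁, c₂` such that for all `t, λ ∈ ℝ`,
`c₁ · min{1, (λt)²} ≤ 1 − j_α(λt) ≤ c₂ · min{1, (λt)²}`. -/
theorem bessel_one_sub_bounds (α : ℝ) (hα : -(1 / 2 : ℝ) < α) :
    ∃ c₁ > (0 : ℝ), ∃ c₂ > (0 : ℝ), ∀ t lam : ℝ,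
      c₁ * min 1 ((lam * t) ^ 2) ≤ 1 - besselNorm α (lam * t) ∧
      1 - besselNorm α (lam * t) ≤ c₂ * min 1 ((lam * t) ^ 2) := by
  have := isProbabilityMeasure_besselLaw hα
  obtain ⟨c₁, hc₁, hlower⟩ :=
    exists_mul_min_le_one_sub_re_charFun (besselLaw_absolutelyContinuous α)
  have hupper := one_sub_re_charFun_le_mul_min (integrable_norm_sq_besselLaw hα)
  refine ⟨c₁, hc₁, max 2 ((∫ x, ‖x‖ ^ 2 ∂besselLaw α) / 2), lt_max_of_lt_left two_pos,
    fun t lam ↦ ?_⟩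
  rw [besselNorm_eq_re_charFun hα, ← sq_abs, ← Real.norm_eq_abs]
  exact ⟨hlower _, hupper _⟩
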